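/- arXiv:1202.0472 — 3 statements merged into one kernel-verified Lean document; each statement's English description precedes it below -/
import Mathlib

section
/- Let X ⊂ ℝⁿ, α ∈ (0,∞), p ∈ [3α,∞) and x ∈ ℝⁿ with 0 < Θ_*^α(X,x) ≤ Θ^{*α}(X,x) < ∞. If M_p^α(X) < ∞, then X has a weak approximate α-tangent at x. -/
open MeasureTheory Metric Set Filter
open scoped ENNReal Topology Classical

noncomputable section

/-- The affine line through `x` and `y`. -/
def lineThrough {n : ℕ} (x y : EuclideanSpace ℝ (Fin n)) : Set (EuclideanSpace ℝ (Fin n)) :=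
  {p | ∃ t : ℝ, p = x + t • (y - x)}

/-- The inverse circumradius `κ(x,y,z)` of a triple of points, set to `0` when the
points are not pairwise distinct. -/
def kappa {n : ℕ} (x y z : EuclideanSpace ℝ (Fin n)) : ℝ≥0∞ :=
  if x ≠ y ∧ y ≠ z ∧ x ≠ z then
    ENNReal.ofReal (2 * Metric.infDist z (lineThrough x y) / (‖x - z‖ * ‖y - z‖))
  else 0

/-- `κ_G(x) = sup_{v,w ∈ X} κ(x,v,w)`. -/
def kappaG {n : ℕ} (X : Set (EuclideanSpace ℝ (Fin n))) (x : EuclideanSpace ℝ (Fin n)) : ℝ≥0∞ :=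
  ⨆ v ∈ X, ⨆ w ∈ X, kappa x v w

/-- `κ_i(x,y) = sup_{z ∈ X} κ(x,y,z)`. -/
def kappaI {n : ℕ} (X : Set (EuclideanSpace ℝ (Fin n))) (x y : EuclideanSpace ℝ (Fin n)) : ℝ≥0∞ :=
  ⨆ z ∈ X, kappa x y z

/-- The energy `U_p^α(X) = ∫_X κ_G(x)^p dH^α(x)`. -/
def energyU {n : ℕ} (p α : ℝ) (X : Set (EuclideanSpace ℝ (Fin n))) : ℝ≥0∞ :=
  ∫⁻ x in X, kappaG X x ^ p ∂ μH[α]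

/-- The energy `I_p^α(X) = ∫_X ∫_X κ_i(x,y)^p dH^α(x) dH^α(y)`. -/
def energyI {n : ℕ} (p α : ℝ) (X : Set (EuclideanSpace ℝ (Fin n))) : ℝ≥0∞ :=
  ∫⁻ y in X, ∫⁻ x in X, kappaI X x y ^ p ∂ μH[α] ∂ μH[α]

/-- The integral Menger curvature `M_p^α(X)`. -/
def energyM {n : ℕ} (p α : ℝ) (X : Set (EuclideanSpace ℝ (Fin n))) : ℝ≥0∞ :=
  ∫⁻ z in X, ∫⁻ y in X, ∫⁻ x in X, kappa x y z ^ p ∂ μH[α] ∂ μH[α] ∂ μH[α]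

/-- The open double cone about `x` in direction `s` with opening angle `ε`. -/
def cone {n : ℕ} (s : EuclideanSpace ℝ (Fin n)) (ε : ℝ) (x : EuclideanSpace ℝ (Fin n)) :
    Set (EuclideanSpace ℝ (Fin n)) :=
  {y | y ≠ x ∧
    min (InnerProductGeometry.angle (y - x) s) (InnerProductGeometry.angle (y - x) (-s)) < ε}

/-- `X` has an approximate `α`-tangent at `x`. -/
def HasApproxTangent {n : ℕ} (α : ℝ) (X : Set (EuclideanSpace ℝ (Fin n)))
    (x : EuclideanSpace ℝ (Fin n)) : Prop :=
  ∃ s : EuclideanSpace ℝ (Fin n), ‖s‖ = 1 ∧ ∀ ε > (0:ℝ),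
    Filter.Tendsto
      (fun r : ℝ => μH[α] ((X \ cone s ε x) ∩ Metric.closedBall x r) / ENNReal.ofReal (2 * r) ^ α)
      (𝓝[>] 0) (𝓝 0)

/-- `X` has a weak approximate `α`-tangent at `x`. -/
def HasWeakApproxTangent {n : ℕ} (α : ℝ) (X : Set (EuclideanSpace ℝ (Fin n)))
    (x : EuclideanSpace ℝ (Fin n)) : Prop :=
  ∃ ρ > (0:ℝ), ∃ s : ℝ → EuclideanSpace ℝ (Fin n), (∀ r ∈ Set.Ioo (0:ℝ) ρ, ‖s r‖ = 1) ∧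
    ∀ ε > (0:ℝ),
      Filter.Tendsto
        (fun r : ℝ =>
          μH[α] ((X \ cone (s r) ε x) ∩ Metric.closedBall x r) / ENNReal.ofReal (2 * r) ^ α)
        (𝓝[>] 0) (𝓝 0)

/-- Lower `α`-density of `X` at `x`. -/
def lowerDensity {n : ℕ} (α : ℝ) (X : Set (EuclideanSpace ℝ (Fin n)))
    (x : EuclideanSpace ℝ (Fin n)) : ℝ≥0∞ :=
  Filter.liminf
    (fun r : ℝ => μH[α] (X ∩ Metric.closedBall x r) / ENNReal.ofReal (2 * r) ^ α) (𝓝[>] 0)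

/-- Upper `α`-density of `X` at `x`. -/
def upperDensity {n : ℕ} (α : ℝ) (X : Set (EuclideanSpace ℝ (Fin n)))
    (x : EuclideanSpace ℝ (Fin n)) : ℝ≥0∞ :=
  Filter.limsup
    (fun r : ℝ => μH[α] (X ∩ Metric.closedBall x r) / ENNReal.ofReal (2 * r) ^ α) (𝓝[>] 0)


lemma norm_mul_sin_le {n : ℕ} (b c : EuclideanSpace ℝ (Fin n)) (hb : b ≠ 0) (t : ℝ) :
    ‖c‖ * Real.sin (InnerProductGeometry.angle c b) ≤ ‖c - t • b‖ := by
  have hb' : 0 < ‖b‖ := norm_pos_iff.mpr hb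
  have h1 := InnerProductGeometry.sin_angle_mul_norm_mul_norm c b
  have h2 : √(inner ℝ c c * inner ℝ b b - inner ℝ c b * inner ℝ c b) ≤ ‖c - t • b‖ * ‖b‖ := by
    apply Real.sqrt_le_iff.mpr
    refine ⟨by positivity, ?_⟩
    rw [mul_pow, norm_sub_sq_real, inner_smul_right, norm_smul, mul_pow, Real.norm_eq_abs, sq_abs,
      real_inner_self_eq_norm_sq, real_inner_self_eq_norm_sq]
    nlinarith [sq_nonneg (t * ‖b‖ ^ 2 - inner ℝ c b)]
  rw [← h1] at h2
  refine le_of_mul_le_mul_right ?_ hb'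
  linarith

lemma infDist_line_lower {n : ℕ} (x a b c : EuclideanSpace ℝ (Fin n)) (r δ k η ε : ℝ)
    (hr : 0 < r) (hδ : 0 < δ) (hk : 0 < k) (hη : 0 < η) (hε : 0 < ε) (hk1 : 2 * δ ≤ k) (hδ1 : δ ≤ 1)
    (hδη : (2 + 6 / k) * δ ≤ η * Real.sin ε)
    (ha : ‖a - x‖ ≤ δ * r) (hb : k * r ≤ ‖b - x‖) (hc : η * r ≤ ‖c - x‖) (hc' : ‖c - x‖ ≤ r)
    (h1 : ε ≤ InnerProductGeometry.angle (c - x) (b - x))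
    (h2 : ε ≤ InnerProductGeometry.angle (c - x) (-(b - x))) :
    δ * r ≤ Metric.infDist c (lineThrough a b) := by
  have hne : (lineThrough a b).Nonempty := ⟨a, 0, by simp⟩
  rw [Metric.le_infDist hne]
  rintro _ ⟨t, rfl⟩
  by_contra hlt
  push Not at hlt
  rw [dist_eq_norm] at hlt
  rw [InnerProductGeometry.angle_neg_right] at h2
  have hb0 : b - x ≠ 0 := by
    apply norm_pos_iff.mp
    have : 0 < k * r := by positivity
    linarith
  have key := norm_mul_sin_le (b - x) (c - x) hb0 t
  have hsin : Real.sin ε ≤ Real.sin (InnerProductGeometry.angle (c - x) (b - x)) := by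
    set θ := InnerProductGeometry.angle (c - x) (b - x)
    rcases le_total θ (Real.pi / 2) with h | h
    · exact Real.sin_le_sin_of_le_of_le_pi_div_two (by linarith [Real.pi_pos]) h h1
    · rw [← Real.sin_pi_sub θ]
      exact Real.sin_le_sin_of_le_of_le_pi_div_two (by linarith [Real.pi_pos]) (by linarith)
        (by linarith)
  have hsε : 0 ≤ Real.sin ε :=
    Real.sin_nonneg_of_nonneg_of_le_pi hε.le (by linarith [InnerProductGeometry.angle_nonneg (c - x) (b - x)])
  -- bound on t
  have hab : k / 2 * r ≤ ‖b - a‖ := by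
    have : ‖b - x‖ ≤ ‖b - a‖ + ‖a - x‖ := by
      have := norm_add_le (b - a) (a - x)
      simpa using this
    nlinarith
  have ht : |t| * ‖b - a‖ ≤ 3 * r := by
    rw [← Real.norm_eq_abs, ← norm_smul]
    have e : t • (b - a) = (c - x) - (c - (a + t • (b - a))) - (a - x) := by abel
    have h3 : ‖t • (b - a)‖ ≤ ‖c - x‖ + ‖c - (a + t • (b - a))‖ + ‖a - x‖ := by
      conv_lhs => rw [e]
      exact (norm_sub_le _ _).trans (by gcongr; exact norm_sub_le _ _)
    nlinarith
  have ht' : |t| ≤ 6 / k := by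
    rw [le_div_iff₀ hk]
    have : |t| * (k / 2 * r) ≤ 3 * r := (mul_le_mul_of_nonneg_left hab (abs_nonneg t)).trans ht
    have : (|t| * k) * r ≤ 6 * r := by linarith
    exact le_of_mul_le_mul_right this hr
  have h1t : |1 - t| ≤ 1 + 6 / k := by
    have := abs_sub (1:ℝ) t
    simp only [abs_one] at this
    linarith
  have hup : ‖(c - x) - t • (b - x)‖ ≤ ‖c - (a + t • (b - a))‖ + |1 - t| * ‖a - x‖ := by
    have e : (c - x) - t • (b - x) = (c - (a + t • (b - a))) + (1 - t) • (a - x) := by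
      module
    rw [e, ← Real.norm_eq_abs, ← norm_smul]
    exact norm_add_le _ _
  have h5 : |1 - t| * ‖a - x‖ ≤ (1 + 6 / k) * (δ * r) := by
    gcongr
  have h6 : η * r * Real.sin ε ≤
      ‖c - x‖ * Real.sin (InnerProductGeometry.angle (c - x) (b - x)) := by
    gcongr
  have h7 : (2 + 6 / k) * δ * r ≤ η * Real.sin ε * r := by gcongr
  nlinarith

lemma kappa_lower {n : ℕ} (x a b c : EuclideanSpace ℝ (Fin n)) (r δ k η ε : ℝ)
    (hr : 0 < r) (hδ : 0 < δ) (hk : 0 < k) (hη : 0 < η) (hε : 0 < ε) (hk1 : 2 * δ ≤ k) (hδ1 : δ ≤ 1)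
    (hδ2 : δ < η)
    (hδη : (2 + 6 / k) * δ ≤ η * Real.sin ε)
    (ha : ‖a - x‖ ≤ δ * r) (hb : k * r ≤ ‖b - x‖) (hb' : ‖b - x‖ ≤ r)
    (hc : η * r ≤ ‖c - x‖) (hc' : ‖c - x‖ ≤ r)
    (h1 : ε ≤ InnerProductGeometry.angle (c - x) (b - x))
    (h2 : ε ≤ InnerProductGeometry.angle (c - x) (-(b - x))) :
    ENNReal.ofReal (δ / (2 * r)) ≤ kappa a b c := by
  have hab : a ≠ b := by
    rintro rfl
    nlinarith [mul_pos hδ hr]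
  have hac : a ≠ c := by
    rintro rfl
    nlinarith
  have hbc : b ≠ c := by
    rintro rfl
    have : b - x ≠ 0 := by
      apply norm_pos_iff.mp
      have : 0 < k * r := by positivity
      linarith
    rw [InnerProductGeometry.angle_self this] at h1
    linarith
  have hi := infDist_line_lower x a b c r δ k η ε hr hδ hk hη hε hk1 hδ1 hδη ha hb hc hc' h1 h2
  have hac' : ‖a - c‖ ≤ 2 * r := by
    have := norm_sub_le (a - x) (c - x)
    simp only [sub_sub_sub_cancel_right] at this
    nlinarith
  have hbc' : ‖b - c‖ ≤ 2 * r := by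
    have := norm_sub_le (b - x) (c - x)
    simp only [sub_sub_sub_cancel_right] at this
    linarith
  have p1 : 0 < ‖a - c‖ := norm_pos_iff.mpr (sub_ne_zero.mpr hac)
  have p2 : 0 < ‖b - c‖ := norm_pos_iff.mpr (sub_ne_zero.mpr hbc)
  rw [kappa, if_pos ⟨hab, hbc, hac⟩]
  apply ENNReal.ofReal_le_ofReal
  have e : δ / (2 * r) = 2 * (δ * r) / ((2 * r) * (2 * r)) := by field_simp
  rw [e]
  have h0 : 0 ≤ Metric.infDist c (lineThrough a b) := Metric.infDist_nonneg
  gcongr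

lemma triple_lower {Ω : Type*} [MeasurableSpace Ω] (ν : Measure Ω) (f : Ω → Ω → Ω → ℝ≥0∞)
    (D A Z Z' : Set Ω) (E : Set (Ω × Ω)) (hD : MeasurableSet D) (hA : MeasurableSet A)
    (hZ : MeasurableSet Z) (hE : MeasurableSet E) (hZZ : Z ⊆ Z') (hAf : ν A ≠ ⊤) (hZf : ν Z ≠ ⊤)
    (K m : ℝ≥0∞) (hf : ∀ z ∈ Z, ∀ y ∈ A, (z, y) ∈ E → ∀ a ∈ D, K ≤ f a y z)
    (hm : ∀ y ∈ A, m ≤ ν (Z ∩ {z | (z, y) ∈ E})) :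
    (K * ν D) * (m * ν A) ≤ ∫⁻ z in Z', ∫⁻ y, ∫⁻ a, f a y z ∂ν ∂ν ∂ν := by
  haveI : IsFiniteMeasure (ν.restrict A) := ⟨by simpa using hAf.lt_top⟩
  haveI : IsFiniteMeasure (ν.restrict Z) := ⟨by simpa using hZf.lt_top⟩
  let g : Ω → Ω → ℝ≥0∞ := fun z y => (K * ν D) * E.indicator 1 (z, y)
  have hg : Measurable (Function.uncurry g) :=
    measurable_const.mul (measurable_one.indicator hE)
  calc (K * ν D) * (m * ν A) = ∫⁻ y in A, (K * ν D) * m ∂ν := by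
        rw [setLIntegral_const, ← mul_assoc]
    _ ≤ ∫⁻ y in A, ∫⁻ z in Z, g z y ∂ν ∂ν := by
        refine setLIntegral_mono' hA fun y hy => ?_
        refine le_trans ?_ (lintegral_const_mul_le _ _)
        gcongr
        refine (hm y hy).trans ?_
        have hEy : MeasurableSet {z | (z, y) ∈ E} := measurable_prodMk_right hE
        have : (fun z => E.indicator (1 : Ω × Ω → ℝ≥0∞) (z, y)) =
            {z | (z, y) ∈ E}.indicator 1 := by
          ext z; simp [indicator]
        rw [this, lintegral_indicator_one hEy, Measure.restrict_apply hEy, inter_comm]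
    _ = ∫⁻ z in Z, ∫⁻ y in A, g z y ∂ν ∂ν := (lintegral_lintegral_swap hg.aemeasurable).symm
    _ ≤ ∫⁻ z in Z, ∫⁻ y, ∫⁻ a, f a y z ∂ν ∂ν ∂ν := by
        refine setLIntegral_mono' hZ fun z hz => ?_
        refine le_trans ?_ (setLIntegral_le_lintegral A _)
        refine setLIntegral_mono' hA fun y hy => ?_
        by_cases h : (z, y) ∈ E
        · simp only [g, indicator_of_mem h, Pi.one_apply, mul_one]
          refine le_trans ?_ (setLIntegral_le_lintegral D _)
          rw [← setLIntegral_const]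
          exact setLIntegral_mono' hD fun a ha => hf z hz y hy h a ha
        · simp [g, h]
    _ ≤ _ := lintegral_mono_set hZZ

lemma exists_small (C e α : ℝ) (hα : 0 < α) (he : 0 < e) :
    ∃ k : ℝ, 0 < k ∧ k < 1 ∧ C * k ^ α ≤ e := by
  have h : Tendsto (fun k : ℝ => C * k ^ α) (𝓝[>] 0) (𝓝 0) := by
    have : ContinuousAt (fun k : ℝ => C * k ^ α) 0 :=
      continuousAt_const.mul (Real.continuousAt_rpow_const _ _ (Or.inr hα.le))
    have h2 := this.tendsto
    simp only [Real.zero_rpow hα.ne', mul_zero] at h2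
    exact h2.mono_left nhdsWithin_le_nhds
  have h1 : ∀ᶠ k : ℝ in 𝓝[>] 0, k ∈ Ioo (0:ℝ) 1 := Ioo_mem_nhdsGT one_pos
  obtain ⟨k, hk, hk'⟩ := (h1.and (h.eventually_le_const he)).exists
  exact ⟨k, hk.1, hk.2, hk'⟩

lemma measurable_bad {n : ℕ} (x : EuclideanSpace ℝ (Fin n)) (ε : ℝ) :
    MeasurableSet {q : EuclideanSpace ℝ (Fin n) × EuclideanSpace ℝ (Fin n) |
      ε ≤ InnerProductGeometry.angle (q.1 - x) (q.2 - x) ∧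
      ε ≤ InnerProductGeometry.angle (q.1 - x) (-(q.2 - x))} := by
  have h : Measurable fun q : EuclideanSpace ℝ (Fin n) × EuclideanSpace ℝ (Fin n) =>
      InnerProductGeometry.angle (q.1 - x) (q.2 - x) := by
    unfold InnerProductGeometry.angle
    refine Real.continuous_arccos.measurable.comp (Measurable.div ?_ ?_)
    · exact (by fun_prop : Continuous fun q : EuclideanSpace ℝ (Fin n) × EuclideanSpace ℝ (Fin n) =>
        inner ℝ (q.1 - x) (q.2 - x)).measurable
    · exact (by fun_prop : Continuous fun q : EuclideanSpace ℝ (Fin n) × EuclideanSpace ℝ (Fin n) =>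
        ‖q.1 - x‖ * ‖q.2 - x‖).measurable
  simp only [InnerProductGeometry.angle_neg_right]
  exact (measurableSet_le measurable_const h).inter
    (measurableSet_le measurable_const (measurable_const.sub h))

lemma diff_cone_subset {n : ℕ} (x y : EuclideanSpace ℝ (Fin n)) (hy : y ≠ x) (ε : ℝ)
    (z : EuclideanSpace ℝ (Fin n)) (hz : z ≠ x) (hc : z ∉ cone (‖y - x‖⁻¹ • (y - x)) ε x) :
    ε ≤ InnerProductGeometry.angle (z - x) (y - x) ∧
      ε ≤ InnerProductGeometry.angle (z - x) (-(y - x)) := by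
  have hpos : 0 < ‖y - x‖⁻¹ := inv_pos.mpr (norm_pos_iff.mpr (sub_ne_zero.mpr hy))
  simp only [cone, mem_setOf_eq, not_and, not_lt] at hc
  have := hc hz
  rw [← smul_neg, InnerProductGeometry.angle_smul_right_of_pos _ _ hpos,
    InnerProductGeometry.angle_smul_right_of_pos _ _ hpos] at this
  exact le_min_iff.mp this

lemma core {n : ℕ} (x : EuclideanSpace ℝ (Fin n)) (ν : Measure (EuclideanSpace ℝ (Fin n)))
    (α p c C : ℝ) (hα : 0 < α) (hp : 3 * α ≤ p) (hc : 0 < c)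
    (hlow : ∀ᶠ r : ℝ in 𝓝[>] 0, ENNReal.ofReal (c * r ^ α) ≤ ν (closedBall x r))
    (hup : ∀ᶠ r : ℝ in 𝓝[>] 0, ν (closedBall x r) ≤ ENNReal.ofReal (C * r ^ α))
    (hE : ∫⁻ z, ∫⁻ y, ∫⁻ a, kappa a y z ^ p ∂ν ∂ν ∂ν ≠ ⊤) (ε : ℝ) (hε : 0 < ε) (hε1 : ε ≤ 1) :
    ∀ᶠ r : ℝ in 𝓝[>] 0, ∃ s : EuclideanSpace ℝ (Fin n), ‖s‖ = 1 ∧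
      ν (closedBall x r \ cone s ε x) ≤ ENNReal.ofReal (ε * r ^ α) := by
  obtain ⟨k, hk, hk1, hkC⟩ := exists_small C (c / 2) α hα (by positivity)
  obtain ⟨η, hη, hη1, hηC⟩ := exists_small C (ε / 2) α hα (by positivity)
  have hsε : 0 < Real.sin ε := Real.sin_pos_of_pos_of_lt_pi hε (by linarith [Real.pi_gt_three])
  obtain ⟨δ, hδ, hδk, hδ1, hδη, hδs⟩ : ∃ δ : ℝ, 0 < δ ∧ 2 * δ ≤ k ∧ δ ≤ 1 / 2 ∧ δ < η ∧
      (2 + 6 / k) * δ ≤ η * Real.sin ε := by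
    have hh : 0 < 2 + 6 / k := by positivity
    refine ⟨min (k / 2) (min (η / 2) (η * Real.sin ε / (2 + 6 / k))), by positivity, ?_, ?_, ?_, ?_⟩
    · linarith [min_le_left (k / 2) (min (η / 2) (η * Real.sin ε / (2 + 6 / k)))]
    · linarith [min_le_left (k / 2) (min (η / 2) (η * Real.sin ε / (2 + 6 / k)))]
    · linarith [(min_le_right (k / 2) (min (η / 2) (η * Real.sin ε / (2 + 6 / k)))).trans
        (min_le_left _ _)]
    · rw [mul_comm, ← le_div_iff₀ hh]
      exact (min_le_right _ _).trans (min_le_right _ _)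
  -- the energy of small balls tends to zero
  have hT : Tendsto (fun r : ℝ => ∫⁻ z in closedBall x r, ∫⁻ y, ∫⁻ a, kappa a y z ^ p ∂ν ∂ν ∂ν)
      (𝓝[>] 0) (𝓝 0) := by
    refine tendsto_setLIntegral_zero hE ?_
    refine tendsto_of_tendsto_of_tendsto_of_le_of_le' tendsto_const_nhds ?_
      (Eventually.of_forall fun _ => zero_le) hup
    have : ContinuousAt (fun k : ℝ => C * k ^ α) 0 :=
      continuousAt_const.mul (Real.continuousAt_rpow_const _ _ (Or.inr hα.le))
    have h2 := ENNReal.tendsto_ofReal this.tendsto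
    simp only [Real.zero_rpow hα.ne', mul_zero, ENNReal.ofReal_zero] at h2
    exact h2.mono_left nhdsWithin_le_nhds
  set K0 : ℝ := (δ / 2) ^ p * (c * δ ^ α) * (ε / 2 * (c / 2)) with hK0
  have hK0pos : 0 < K0 := by positivity
  have hTs := hT.eventually_lt_const (ENNReal.ofReal_pos.mpr hK0pos)
  obtain ⟨r₀, hr₀, hr₀s⟩ := mem_nhdsGT_iff_exists_Ioo_subset.mp (hlow.and hup)
  filter_upwards [hTs, Ioo_mem_nhdsGT (show (0:ℝ) < min r₀ 1 from lt_min hr₀ one_pos)]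
    with r hTr hr
  have hr0 : 0 < r := hr.1
  have hrr : r < r₀ := hr.2.trans_le (min_le_left _ _)
  have hr1 : r ≤ 1 := (hr.2.trans_le (min_le_right _ _)).le
  have scale : ∀ t : ℝ, 0 < t → t ≤ 1 → ENNReal.ofReal (c * (t * r) ^ α) ≤ ν (closedBall x (t * r)) ∧
      ν (closedBall x (t * r)) ≤ ENNReal.ofReal (C * (t * r) ^ α) := by
    intro t ht ht1
    exact hr₀s ⟨by positivity, by nlinarith⟩
  have hfin : ν (closedBall x r) ≠ ⊤ := by
    have := (scale 1 one_pos le_rfl).2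
    rw [one_mul] at this
    exact ne_top_of_le_ne_top ENNReal.ofReal_ne_top this
  have hrα : 0 < r ^ α := Real.rpow_pos_of_pos hr0 α
  have hsmall : ∀ t e : ℝ, 0 < t → t ≤ 1 → C * t ^ α ≤ e →
      ν (closedBall x (t * r)) ≤ ENNReal.ofReal (e * r ^ α) := by
    intro t e ht ht1 he
    refine (scale t ht ht1).2.trans (ENNReal.ofReal_le_ofReal ?_)
    rw [Real.mul_rpow ht.le hr0.le, ← mul_assoc]
    gcongr
  by_contra hcon
  push Not at hcon
  -- the three sets
  let A := closedBall x r \ closedBall x (k * r)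
  let Z := closedBall x r \ closedBall x (η * r)
  let D := closedBall x (δ * r)
  have hAm : ENNReal.ofReal (c / 2 * r ^ α) ≤ ν A := by
    refine le_trans ?_ le_measure_diff
    have h1 := (scale 1 one_pos le_rfl).1
    rw [one_mul] at h1
    have h2 := hsmall k (c / 2) hk hk1.le hkC
    calc ENNReal.ofReal (c / 2 * r ^ α)
        = ENNReal.ofReal (c * r ^ α) - ENNReal.ofReal (c / 2 * r ^ α) := by
          rw [← ENNReal.ofReal_sub _ (by positivity)]; congr 1; ring
      _ ≤ _ := tsub_le_tsub h1 h2
  have hDm : ENNReal.ofReal (c * (δ * r) ^ α) ≤ ν D := (scale δ hδ (by linarith)).1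
  have hlb := triple_lower ν (fun a y z => kappa a y z ^ p) D A Z (closedBall x r) _
    measurableSet_closedBall (measurableSet_closedBall.diff measurableSet_closedBall)
    (measurableSet_closedBall.diff measurableSet_closedBall) (measurable_bad x ε) diff_subset
    (ne_top_of_le_ne_top hfin (measure_mono diff_subset))
    (ne_top_of_le_ne_top hfin (measure_mono diff_subset))
    (ENNReal.ofReal ((δ / (2 * r)) ^ p)) (ENNReal.ofReal (ε / 2 * r ^ α)) ?_ ?_
  · refine absurd hTr (not_lt.mpr (le_trans ?_ hlb))
    calc ENNReal.ofReal K0 ≤ ENNReal.ofReal ((δ / (2 * r)) ^ p * (c * (δ * r) ^ α) *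
          (ε / 2 * r ^ α * (c / 2 * r ^ α))) := by
          apply ENNReal.ofReal_le_ofReal
          have e1 : (δ / (2 * r)) ^ p = (δ / 2) ^ p * r ^ (-p) := by
            rw [← div_div, Real.div_rpow (by positivity) hr0.le, Real.rpow_neg hr0.le, div_eq_mul_inv]
          have e2 : (δ * r) ^ α = δ ^ α * r ^ α := Real.mul_rpow hδ.le hr0.le
          have e3 : r ^ (-p) * r ^ α * r ^ α * r ^ α = r ^ (3 * α - p) := by
            rw [← Real.rpow_add hr0, ← Real.rpow_add hr0, ← Real.rpow_add hr0]
            congr 1; ring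
          have e4 : 1 ≤ r ^ (3 * α - p) :=
            Real.one_le_rpow_of_pos_of_le_one_of_nonpos hr0 hr1 (by linarith)
          calc K0 = K0 * 1 := (mul_one _).symm
            _ ≤ K0 * r ^ (3 * α - p) := by gcongr
            _ = _ := by rw [e1, e2, ← e3, hK0]; ring
      _ = ENNReal.ofReal ((δ / (2 * r)) ^ p) * ENNReal.ofReal (c * (δ * r) ^ α) *
          (ENNReal.ofReal (ε / 2 * r ^ α) * ENNReal.ofReal (c / 2 * r ^ α)) := by
          rw [ENNReal.ofReal_mul (by positivity), ENNReal.ofReal_mul (p := (δ / (2 * r)) ^ p)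
            (by positivity), ENNReal.ofReal_mul (p := ε / 2 * r ^ α) (by positivity)]
      _ ≤ _ := by gcongr
  · rintro z ⟨hz1, hz2⟩ y ⟨hy1, hy2⟩ ⟨hq1, hq2⟩ a ha
    simp only [D, mem_closedBall, dist_eq_norm, not_le] at hz1 hz2 hy1 hy2 ha
    rw [← ENNReal.ofReal_rpow_of_pos (by positivity)]
    exact ENNReal.rpow_le_rpow (kappa_lower x a y z r δ k η ε hr0 hδ hk hη hε hδk (by linarith) hδη
      hδs ha hy2.le hy1 hz2.le hz1 hq1 hq2) (by linarith)
  · rintro y ⟨hy1, hy2⟩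
    have hyx : y ≠ x := by
      rintro rfl
      exact hy2 (mem_closedBall_self (by positivity))
    have hcon' := hcon (‖y - x‖⁻¹ • (y - x))
      (norm_smul_inv_norm (𝕜 := ℝ) (sub_ne_zero.mpr hyx))
    have hsub : (closedBall x r \ cone (‖y - x‖⁻¹ • (y - x)) ε x) \ closedBall x (η * r) ⊆
        Z ∩ {z | (z, y) ∈ {q : EuclideanSpace ℝ (Fin n) × EuclideanSpace ℝ (Fin n) |
          ε ≤ InnerProductGeometry.angle (q.1 - x) (q.2 - x) ∧
          ε ≤ InnerProductGeometry.angle (q.1 - x) (-(q.2 - x))}} := by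
      rintro z ⟨⟨hz1, hz2⟩, hz3⟩
      refine ⟨⟨hz1, hz3⟩, diff_cone_subset x y hyx ε z ?_ hz2⟩
      rintro rfl
      exact hz3 (mem_closedBall_self (by positivity))
    refine le_trans ?_ (measure_mono hsub)
    refine le_trans ?_ le_measure_diff
    have h2 := hsmall η (ε / 2) hη hη1.le hηC
    calc ENNReal.ofReal (ε / 2 * r ^ α)
        = ENNReal.ofReal (ε * r ^ α) - ENNReal.ofReal (ε / 2 * r ^ α) := by
          rw [← ENNReal.ofReal_sub _ (by positivity)]; congr 1; ring
      _ ≤ _ := tsub_le_tsub hcon'.le h2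

lemma cone_mono {n : ℕ} (s x : EuclideanSpace ℝ (Fin n)) {ε ε' : ℝ} (h : ε ≤ ε') :
    cone s ε x ⊆ cone s ε' x := fun _ hy => ⟨hy.1, hy.2.trans_le h⟩

lemma measurableSet_cone {n : ℕ} (s x : EuclideanSpace ℝ (Fin n)) (ε : ℝ) :
    MeasurableSet (cone s ε x) := by
  have h : Measurable fun y : EuclideanSpace ℝ (Fin n) => InnerProductGeometry.angle (y - x) s := by
    unfold InnerProductGeometry.angle
    refine Real.continuous_arccos.measurable.comp (Measurable.div ?_ ?_)
    · exact (by fun_prop : Continuous fun y : EuclideanSpace ℝ (Fin n) =>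
        inner ℝ (y - x) s).measurable
    · exact (by fun_prop : Continuous fun y : EuclideanSpace ℝ (Fin n) =>
        ‖y - x‖ * ‖s‖).measurable
  unfold cone
  simp only [InnerProductGeometry.angle_neg_right]
  exact (measurableSet_singleton x).compl.inter
    (measurableSet_lt (h.min (measurable_const.sub h)) measurable_const)

/-- Diagonal selection. -/
lemma diagonal {S : Type*} [Nonempty S] (Q : ℝ → ℝ → S → Prop)
    (hQ : ∀ ε : ℝ, 0 < ε → ε ≤ 1 → ∀ᶠ r : ℝ in 𝓝[>] 0, ∃ s, Q r ε s) :
    ∃ s : ℝ → S, ∀ ε : ℝ, 0 < ε → ∀ᶠ r : ℝ in 𝓝[>] 0, ∃ e, 0 < e ∧ e ≤ ε ∧ e ≤ 1 ∧ Q r e (s r) := by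
  let I : ℝ → Set ℝ := fun r => {e | 0 < e ∧ e ≤ 1 ∧ ∃ s, Q r e s}
  have key : ∀ r : ℝ, ∃ s : S, 0 < r → (I r).Nonempty →
      ∃ e, 0 < e ∧ e ≤ 1 ∧ e < sInf (I r) + r ∧ Q r e s := by
    intro r
    by_cases h : 0 < r ∧ (I r).Nonempty
    · obtain ⟨e, ⟨he0, he1, s, hs⟩, he⟩ :=
        exists_lt_of_csInf_lt h.2 (show sInf (I r) < sInf (I r) + r by linarith [h.1])
      exact ⟨s, fun _ _ => ⟨e, he0, he1, he, hs⟩⟩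
    · exact ⟨Classical.arbitrary S, fun h1 h2 => absurd ⟨h1, h2⟩ h⟩
  choose s hs using key
  refine ⟨s, fun ε hε => ?_⟩
  have hm : 0 < min (ε / 2) 1 := by positivity
  filter_upwards [hQ (min (ε / 2) 1) hm (min_le_right _ _),
    Ioo_mem_nhdsGT (show (0:ℝ) < ε / 2 by positivity)] with r hr hr2
  have hmem : min (ε / 2) 1 ∈ I r := ⟨hm, min_le_right _ _, hr⟩
  obtain ⟨e, he0, he1, he2, hq⟩ := hs r hr2.1 ⟨_, hmem⟩
  have : sInf (I r) ≤ min (ε / 2) 1 := csInf_le ⟨0, fun e he => he.1.le⟩ hmem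
  refine ⟨e, he0, ?_, he1, hq⟩
  linarith [min_le_left (ε / 2) 1, hr2.2]

theorem finite_energyM_implies_weak_approx_tangent (n : ℕ) (X : Set (EuclideanSpace ℝ (Fin n)))
    (α p : ℝ) (hα : α ∈ Set.Ioi (0 : ℝ)) (hp : p ∈ Set.Ici (3 * α))
    (x : EuclideanSpace ℝ (Fin n))
    (hd1 : 0 < lowerDensity α X x)
    (hd2 : lowerDensity α X x ≤ upperDensity α X x)
    (hd3 : upperDensity α X x < ⊤)
    (hE : energyM p α X < ⊤) :
    HasWeakApproxTangent α X x := by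
  have hα : 0 < α := hα
  have hp : 3 * α ≤ p := hp
  set ν : Measure (EuclideanSpace ℝ (Fin n)) := (μH[α]).restrict X with hν
  have hball : ∀ r, μH[α] (X ∩ closedBall x r) = ν (closedBall x r) := fun r => by
    rw [hν, Measure.restrict_apply measurableSet_closedBall, inter_comm]
  have hcone : ∀ s r ε, μH[α] ((X \ cone s ε x) ∩ closedBall x r) =
      ν (closedBall x r \ cone s ε x) := fun s r ε => by
    rw [hν, Measure.restrict_apply (measurableSet_closedBall.diff (measurableSet_cone s x ε))]
    congr 1
    ext y
    simp only [mem_inter_iff, mem_diff]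
    tauto
  have hpos : ∀ᶠ r : ℝ in 𝓝[>] 0, 0 < r := eventually_mem_nhdsWithin
  obtain ⟨c, hc, hcl⟩ : ∃ c : ℝ, 0 < c ∧ ENNReal.ofReal c < lowerDensity α X x := by
    obtain ⟨q, hq0, hq⟩ := ENNReal.lt_iff_exists_real_btwn.mp hd1
    refine ⟨q, ?_, hq.2⟩
    simpa using hq.1
  obtain ⟨C, hC0, hCu⟩ : ∃ C : ℝ, 0 ≤ C ∧ upperDensity α X x < ENNReal.ofReal C := by
    obtain ⟨q, hq0, hq⟩ := ENNReal.lt_iff_exists_real_btwn.mp hd3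
    exact ⟨q, hq0, hq.1⟩
  have h2r : ∀ r : ℝ, 0 < r → ENNReal.ofReal (2 * r) ^ α = ENNReal.ofReal (2 ^ α * r ^ α) := by
    intro r hr
    rw [ENNReal.ofReal_rpow_of_pos (by positivity), Real.mul_rpow (by positivity) hr.le]
  have hlow : ∀ᶠ r : ℝ in 𝓝[>] 0, ENNReal.ofReal ((c * 2 ^ α) * r ^ α) ≤ ν (closedBall x r) := by
    filter_upwards [eventually_lt_of_lt_liminf hcl, hpos] with r hr hr0
    have hrα : 0 < r ^ α := Real.rpow_pos_of_pos hr0 α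
    rw [hball, h2r r hr0] at hr
    rw [mul_assoc, ENNReal.ofReal_mul hc.le]
    exact ENNReal.mul_le_of_le_div hr.le
  have hup : ∀ᶠ r : ℝ in 𝓝[>] 0, ν (closedBall x r) ≤ ENNReal.ofReal ((C * 2 ^ α) * r ^ α) := by
    filter_upwards [eventually_lt_of_limsup_lt hCu, hpos] with r hr hr0
    have hrα : 0 < r ^ α := Real.rpow_pos_of_pos hr0 α
    rw [hball, h2r r hr0] at hr
    rw [mul_assoc, ENNReal.ofReal_mul hC0]
    refine (ENNReal.div_le_iff ?_ ENNReal.ofReal_ne_top).mp hr.le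
    exact (ENNReal.ofReal_pos.mpr (by positivity)).ne'
  obtain ⟨s, hs⟩ := diagonal (fun r ε s => ‖s‖ = 1 ∧
      ν (closedBall x r \ cone s ε x) ≤ ENNReal.ofReal (ε * r ^ α))
    (fun ε hε hε1 => core x ν α p (c * 2 ^ α) (C * 2 ^ α) hα hp (by positivity) hlow hup hE.ne
      ε hε hε1)
  obtain ⟨ρ, hρ, hρs⟩ := mem_nhdsGT_iff_exists_Ioo_subset.mp (hs 1 one_pos)
  refine ⟨ρ, hρ, s, fun r hr => ?_, fun ε hε => ?_⟩
  · obtain ⟨e, -, -, -, h, -⟩ := hρs hr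
    exact h
  · rw [ENNReal.tendsto_nhds_zero]
    intro t ht
    obtain ⟨q, hq0, hq⟩ := ENNReal.lt_iff_exists_real_btwn.mp ht
    have hqp : 0 < q := by simpa using hq.1
    filter_upwards [hs (min ε q) (lt_min hε hqp), hpos] with r ⟨e, he0, he, _, _, hm⟩ hr0
    have hrα : 0 < r ^ α := Real.rpow_pos_of_pos hr0 α
    refine le_trans ?_ hq.2.le
    rw [hcone, h2r r hr0]
    refine ENNReal.div_le_of_le_mul ?_
    refine (measure_mono (diff_subset_diff_right
      (cone_mono (s r) x (he.trans (min_le_left _ _))))).trans (hm.trans ?_)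
    rw [← ENNReal.ofReal_mul hqp.le]
    apply ENNReal.ofReal_le_ofReal
    have h1 : (1:ℝ) ≤ 2 ^ α := Real.one_le_rpow (by norm_num) hα.le
    have h2 : r ^ α ≤ 2 ^ α * r ^ α := by nlinarith
    have h3 := he.trans (min_le_right ε q)
    gcongr

end
end

section
/- Let E = ([−1,1]×{0}) ∪ ({0}×[0,1]) ⊂ ℝ². For every p ∈ [2,3) one has M_p^1(E) ≤ 72π/(3−p)²; in particular M_p^1(E) < ∞. -/
open MeasureTheory Metric Set Filter
open scoped ENNReal Topology Classical

noncomputable section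

/-- The T-shaped set `E = ([-1,1] × {0}) ∪ ({0} × [0,1])` in `ℝ²`. -/
def Eset : Set (EuclideanSpace ℝ (Fin 2)) :=
  {p | p 1 = 0 ∧ p 0 ∈ Set.Icc (-1 : ℝ) 1} ∪ {p | p 0 = 0 ∧ p 1 ∈ Set.Icc (0 : ℝ) 1}


def d2 (x y : EuclideanSpace ℝ (Fin 2)) : ℝ := (x 0 - y 0)^2 + (x 1 - y 1)^2

def cr (x y z : EuclideanSpace ℝ (Fin 2)) : ℝ :=
  (x 0 - z 0) * (y 1 - z 1) - (x 1 - z 1) * (y 0 - z 0)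

def K2 (x y z : EuclideanSpace ℝ (Fin 2)) : ℝ := 4 * cr x y z ^ 2 / (d2 x y * d2 y z * d2 x z)

lemma norm_eq_d2 (x y : EuclideanSpace ℝ (Fin 2)) : ‖x - y‖ = √(d2 x y) := by
  rw [EuclideanSpace.norm_eq]; simp [d2, Fin.sum_univ_two]

lemma d2_pos {x y : EuclideanSpace ℝ (Fin 2)} (h : x ≠ y) : 0 < d2 x y := by
  have h1 : 0 < ‖x - y‖ := norm_pos_iff.2 (sub_ne_zero.2 h)
  rw [norm_eq_d2] at h1
  exact Real.sqrt_pos.1 h1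

lemma d2_nonneg (x y : EuclideanSpace ℝ (Fin 2)) : 0 ≤ d2 x y := by
  unfold d2; positivity

lemma K2_nonneg (x y z : EuclideanSpace ℝ (Fin 2)) : 0 ≤ K2 x y z := by
  unfold K2
  have := d2_nonneg x y; have := d2_nonneg y z; have := d2_nonneg x z
  positivity

lemma kappa_le (x y z : EuclideanSpace ℝ (Fin 2)) :
    kappa x y z ≤ ENNReal.ofReal (√(K2 x y z)) := by
  unfold kappa
  split_ifs with h
  · obtain ⟨hxy, hyz, hxz⟩ := h
    apply ENNReal.ofReal_le_ofReal
    have pxy := d2_pos hxy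
    have pyz := d2_pos hyz
    have pxz := d2_pos hxz
    set t : ℝ := ((z 0 - x 0) * (y 0 - x 0) + (z 1 - x 1) * (y 1 - x 1)) / d2 x y with ht
    have hm : x + t • (y - x) ∈ lineThrough x y := ⟨t, rfl⟩
    have h1 := Metric.infDist_le_dist_of_mem (x := z) hm
    rw [dist_eq_norm, norm_eq_d2] at h1
    have h2 : d2 z (x + t • (y - x)) = cr x y z ^ 2 / d2 x y := by
      rw [eq_div_iff pxy.ne']
      have htd : t * d2 x y = (z 0 - x 0) * (y 0 - x 0) + (z 1 - x 1) * (y 1 - x 1) := by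
        rw [ht]; field_simp
      have e : d2 z (x + t • (y - x)) * d2 x y =
        d2 z x * d2 x y - 2 * (t * d2 x y) * ((z 0 - x 0) * (y 0 - x 0) + (z 1 - x 1) * (y 1 - x 1))
          + (t * d2 x y)^2 := by
        simp [d2]; ring
      rw [e, htd]
      simp [d2, cr]; ring
    rw [h2] at h1
    rw [norm_eq_d2, norm_eq_d2]
    apply Real.le_sqrt_of_sq_le
    have h0 : 0 ≤ infDist z (lineThrough x y) := infDist_nonneg
    have h3 : infDist z (lineThrough x y) ^ 2 ≤ cr x y z ^ 2 / d2 x y := by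
      have := pow_le_pow_left₀ h0 h1 2
      rwa [Real.sq_sqrt (by positivity)] at this
    rw [div_pow, mul_pow, mul_pow, Real.sq_sqrt pxz.le, Real.sq_sqrt pyz.le]
    have : K2 x y z = 2^2 * (cr x y z ^ 2 / d2 x y) / (d2 x z * d2 y z) := by
      unfold K2; field_simp; ring
    rw [this]
    gcongr
  · simp

def Gk (p a b c : ℝ) : ℝ≥0∞ :=
  ENNReal.ofReal (2^p * |c|^(4-p)) * ENNReal.ofReal ((a^2+c^2)⁻¹) * ENNReal.ofReal ((b^2+c^2)⁻¹)

lemma pow_le_Gk {p : ℝ} (hp : 2 ≤ p) (a b c k : ℝ) (hk : 0 ≤ k)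
    (h : k = 4 * c^2 / ((a^2+c^2)*(b^2+c^2)) ∨ k = 0) :
    (ENNReal.ofReal √k) ^ p ≤ Gk p a b c := by
  rcases eq_or_ne k 0 with rfl | hk0
  · simp [ENNReal.zero_rpow_of_pos (by linarith : 0 < p)]
  have h := h.resolve_right hk0
  have hc : c ≠ 0 := by rintro rfl; simp at h; exact hk0 h
  have hc2 : 0 < c^2 := by positivity
  have hca : 0 < |c| := abs_pos.2 hc
  unfold Gk
  rw [← ENNReal.ofReal_mul (by positivity), ← ENNReal.ofReal_mul (by positivity),
    ENNReal.ofReal_rpow_of_nonneg (by positivity) (by linarith)]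
  apply ENNReal.ofReal_le_ofReal
  have hkp : 0 < √k := Real.sqrt_pos.2 (lt_of_le_of_ne hk hk0.symm)
  have e1 : √k ^ p = k * √k ^ (p-2) := by
    nth_rewrite 2 [← Real.sq_sqrt hk]
    rw [← Real.rpow_natCast, ← Real.rpow_add hkp]; congr 1; push_cast; ring
  have hle : √k ≤ 2 / |c| := by
    apply Real.sqrt_le_iff.2 ⟨by positivity, ?_⟩
    rw [div_pow, sq_abs, h, div_le_div_iff₀ (by positivity) hc2]
    nlinarith [mul_nonneg (sq_nonneg a) (sq_nonneg b), mul_nonneg (sq_nonneg a) hc2.le,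
      mul_nonneg (sq_nonneg b) hc2.le]
  have e2 : √k ^ (p-2) ≤ (2/|c|)^(p-2) := Real.rpow_le_rpow hkp.le hle (by linarith)
  have e3 : (2:ℝ)^p * |c|^(4-p) = 4 * c^2 * (2/|c|)^(p-2) := by
    rw [Real.div_rpow (by norm_num) hca.le, show (4-p) = 2 - (p-2) by ring,
      Real.rpow_sub hca, show p = 2 + (p-2) by ring, Real.rpow_add (by norm_num : (0:ℝ)<2)]
    simp
    ring
  rw [e1, e3]
  calc _ ≤ k * (2/|c|)^(p-2) := by gcongr
    _ = _ := by rw [h]; field_simp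

def hp (a : ℝ) : EuclideanSpace ℝ (Fin 2) := !₂[a, 0]
def vp (a : ℝ) : EuclideanSpace ℝ (Fin 2) := !₂[0, a]

lemma hp0 (a : ℝ) : hp a 0 = a := by simp [hp]
lemma hp1 (a : ℝ) : hp a 1 = 0 := by simp [hp]
lemma vp0 (a : ℝ) : vp a 0 = 0 := by simp [vp]
lemma vp1 (a : ℝ) : vp a 1 = a := by simp [vp]

lemma isom_hp : Isometry hp := by
  apply Isometry.of_dist_eq
  intro x y
  rw [dist_eq_norm, norm_eq_d2, d2, hp0, hp0, hp1, hp1, Real.dist_eq]; simp [Real.sqrt_sq_eq_abs]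

lemma isom_vp : Isometry vp := by
  apply Isometry.of_dist_eq
  intro x y
  rw [dist_eq_norm, norm_eq_d2, d2, vp0, vp0, vp1, vp1, Real.dist_eq]; simp [Real.sqrt_sq_eq_abs]

lemma alg (A c P Q : ℝ) : 4 * (A * c^2) / (A * P * Q) = 4 * c^2 / (P * Q) ∨
    4 * (A * c^2) / (A * P * Q) = 0 := by
  rcases eq_or_ne A 0 with rfl | h
  · right; simp
  · left
    rw [show 4 * (A * c^2) = A * (4 * c^2) by ring, mul_assoc, mul_div_mul_left _ _ h]

lemma kappa_bound {p : ℝ} (hp2 : 2 ≤ p) (a b c : ℝ) (x y z : EuclideanSpace ℝ (Fin 2))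
    (hcr : cr x y z ^ 2 = (a-b)^2 * c^2)
    (hd : d2 x y * d2 y z * d2 x z = (a-b)^2 * (a^2+c^2) * (b^2+c^2)) :
    kappa x y z ^ p ≤ Gk p a b c := by
  refine (ENNReal.rpow_le_rpow (kappa_le x y z) (by linarith)).trans ?_
  apply pow_le_Gk hp2 _ _ _ _ (K2_nonneg _ _ _)
  unfold K2
  rw [hcr, hd]
  exact alg _ _ _ _

lemma kappa_zero {p : ℝ} (hp2 : 2 ≤ p) (x y z : EuclideanSpace ℝ (Fin 2)) (hcr : cr x y z = 0) :
    kappa x y z ^ p = 0 := by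
  have := kappa_le x y z
  simp [K2, hcr] at this
  rw [this, ENNReal.zero_rpow_of_pos (by linarith)]

lemma lint_le (f : EuclideanSpace ℝ (Fin 2) → ℝ≥0∞) :
    ∫⁻ x in Eset, f x ∂ μH[1] ≤
      (∫⁻ a in Icc (-1:ℝ) 1, f (hp a)) + ∫⁻ a in Icc (0:ℝ) 1, f (vp a) := by
  have key : ∀ (g : ℝ → EuclideanSpace ℝ (Fin 2)) (hg : Isometry g) (s : Set ℝ),
      ∫⁻ x in g '' s, f x ∂ μH[1] = ∫⁻ a in s, f (g a) := by
    intro g hg s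
    have me : MeasurableEmbedding g := hg.isClosedEmbedding.measurableEmbedding
    have h1 := hg.map_hausdorffMeasure (d := 1) (Or.inl zero_le_one)
    rw [hausdorffMeasure_real] at h1
    have h2 : (μH[1] : Measure (EuclideanSpace ℝ (Fin 2))).restrict (g '' s)
        = Measure.map g (volume.restrict s) := by
      have := me.restrict_map volume (g '' s)
      rw [me.injective.preimage_image] at this
      rw [← this, h1, Measure.restrict_restrict_of_subset (image_subset_range _ _)]
    rw [h2, me.lintegral_map]
  have hE : Eset ⊆ hp '' Icc (-1) 1 ∪ vp '' Icc 0 1 := by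
    rintro q (⟨h1, h2⟩ | ⟨h1, h2⟩)
    · left
      refine ⟨q 0, h2, ?_⟩
      ext i; fin_cases i
      · exact hp0 _
      · exact (hp1 _).trans h1.symm
    · right
      refine ⟨q 1, h2, ?_⟩
      ext i; fin_cases i
      · exact (vp0 _).trans h1.symm
      · exact vp1 _
  calc _ ≤ ∫⁻ x in hp '' Icc (-1) 1 ∪ vp '' Icc 0 1, f x ∂ μH[1] := lintegral_mono_set hE
    _ ≤ _ := lintegral_union_le _ _ _
    _ = _ := by rw [key _ isom_hp, key _ isom_vp]

lemma Gk_meas_comp (p : ℝ) {α : Type*} [MeasurableSpace α] {f g h : α → ℝ} (hf : Measurable f)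
    (hg : Measurable g) (hh : Measurable h) : Measurable (fun t => Gk p (f t) (g t) (h t)) := by
  unfold Gk
  fun_prop

def SS (p : ℝ) (μ ν : Measure ℝ) : ℝ≥0∞ := ∫⁻ c, ∫⁻ b, ∫⁻ a, Gk p a b c ∂μ ∂μ ∂ν

lemma perm2 (p : ℝ) (μ ν : Measure ℝ) [SFinite μ] [SFinite ν] :
    ∫⁻ z, ∫⁻ y, ∫⁻ x, Gk p x z y ∂μ ∂ν ∂μ = SS p μ ν := by
  unfold SS
  rw [lintegral_lintegral_swap]
  apply Measurable.aemeasurable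
  apply Measurable.lintegral_prod_right'
    (f := fun q : (ℝ × ℝ) × ℝ => Gk p q.2 q.1.1 q.1.2)
  apply Gk_meas_comp <;> fun_prop

lemma perm1 (p : ℝ) (μ ν : Measure ℝ) [SFinite μ] [SFinite ν] :
    ∫⁻ z, ∫⁻ y, ∫⁻ x, Gk p y z x ∂ν ∂μ ∂μ = SS p μ ν := by
  rw [← perm2]
  apply lintegral_congr
  intro z
  rw [lintegral_lintegral_swap]
  apply Measurable.aemeasurable
  apply Gk_meas_comp <;> fun_prop

lemma Gk_symm (p a b c : ℝ) : Gk p a b c = Gk p b a c := by unfold Gk; ring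

lemma total (p : ℝ) (hp2 : 2 ≤ p) :
    energyM p 1 Eset ≤ 3 * SS p (volume.restrict (Icc (-1) 1)) (volume.restrict (Icc 0 1))
      + 3 * SS p (volume.restrict (Icc 0 1)) (volume.restrict (Icc (-1) 1)) := by
  set μ : Measure ℝ := volume.restrict (Icc (-1) 1)
  set ν : Measure ℝ := volume.restrict (Icc 0 1)
  have m3 : ∀ (ρ : Measure ℝ) [SFinite ρ] (f g h : (ℝ × ℝ) × ℝ → ℝ), Measurable f → Measurable g →
      Measurable h → Measurable (fun q : ℝ × ℝ => ∫⁻ x, Gk p (f (q, x)) (g (q, x)) (h (q, x)) ∂ρ) := by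
    intro ρ _ f g h hf hg hh
    exact Measurable.lintegral_prod_right' (f := fun t => Gk p (f t) (g t) (h t))
      (Gk_meas_comp p hf hg hh)
  have m1 : ∀ (z : ℝ) (ρ : Measure ℝ) [SFinite ρ] (f g h : (ℝ × ℝ) × ℝ → ℝ), Measurable f →
      Measurable g → Measurable h →
      Measurable (fun y : ℝ => ∫⁻ x, Gk p (f ((z, y), x)) (g ((z, y), x)) (h ((z, y), x)) ∂ρ) := by
    intro z ρ _ f g h hf hg hh
    exact (m3 ρ f g h hf hg hh).comp (measurable_const.prodMk measurable_id)
  have m2 : ∀ (σ ρ : Measure ℝ) [SFinite ρ] [SFinite σ] (f g h : (ℝ × ℝ) × ℝ → ℝ), Measurable f →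
      Measurable g → Measurable h → Measurable (fun z : ℝ =>
        ∫⁻ y, ∫⁻ x, Gk p (f ((z, y), x)) (g ((z, y), x)) (h ((z, y), x)) ∂ρ ∂σ) := by
    intro σ ρ _ _ f g h hf hg hh
    exact Measurable.lintegral_prod_right' (m3 ρ f g h hf hg hh)
  have H : ∀ z, ∫⁻ y in Eset, ∫⁻ x in Eset, kappa x y (hp z) ^ p ∂ μH[1] ∂ μH[1] ≤
      ((∫⁻ y, ∫⁻ x, Gk p y z x ∂ν ∂μ) + ∫⁻ y, ∫⁻ x, Gk p x z y ∂μ ∂ν)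
        + ∫⁻ y, ∫⁻ x, Gk p x y z ∂ν ∂ν := by
    intro z
    have hy : Measurable (fun y : ℝ => ∫⁻ x, Gk p x z y ∂μ) :=
      m1 z μ (fun q => q.2) (fun q => q.1.1) (fun q => q.1.2) (by fun_prop) (by fun_prop) (by fun_prop)
    rw [add_assoc, ← lintegral_add_left hy]
    refine (lint_le _).trans (add_le_add (lintegral_mono fun y => ?_) (lintegral_mono fun y => ?_))
    · refine (lint_le _).trans ?_
      rw [lintegral_congr (g := fun _ => 0) (fun x => kappa_zero hp2 _ _ _ (by simp [cr, hp1]))]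
      rw [lintegral_zero, zero_add]
      refine lintegral_mono fun x => kappa_bound hp2 _ _ _ _ _ _ ?_ ?_ <;>
        simp only [cr, d2, hp0, hp1, vp0, vp1] <;> ring
    · refine (lint_le _).trans (add_le_add ?_ ?_)
      all_goals
        refine lintegral_mono fun x => kappa_bound hp2 _ _ _ _ _ _ ?_ ?_ <;>
          simp only [cr, d2, hp0, hp1, vp0, vp1] <;> ring
  have V : ∀ z, ∫⁻ y in Eset, ∫⁻ x in Eset, kappa x y (vp z) ^ p ∂ μH[1] ∂ μH[1] ≤
      ((∫⁻ y, ∫⁻ x, Gk p y z x ∂μ ∂ν) + ∫⁻ y, ∫⁻ x, Gk p x z y ∂ν ∂μ)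
        + ∫⁻ y, ∫⁻ x, Gk p x y z ∂μ ∂μ := by
    intro z
    have hy : Measurable (fun y : ℝ => ∫⁻ x, Gk p x y z ∂μ) :=
      m1 z μ (fun q => q.2) (fun q => q.1.2) (fun q => q.1.1) (by fun_prop) (by fun_prop) (by fun_prop)
    rw [add_assoc, add_comm, add_comm (∫⁻ y, ∫⁻ x, Gk p x z y ∂ν ∂μ), ← lintegral_add_left hy]
    refine (lint_le _).trans (add_le_add (lintegral_mono fun y => ?_) (lintegral_mono fun y => ?_))
    · refine (lint_le _).trans (add_le_add ?_ ?_)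
      all_goals
        refine lintegral_mono fun x => kappa_bound hp2 _ _ _ _ _ _ ?_ ?_ <;>
          simp only [cr, d2, hp0, hp1, vp0, vp1] <;> ring
    · refine (lint_le _).trans ?_
      rw [lintegral_congr (f := fun a => kappa (vp a) (vp y) (vp z) ^ p) (g := fun _ => 0) 
        (fun x => kappa_zero hp2 _ _ _ (by simp [cr, vp0]))]
      rw [lintegral_zero, add_zero]
      refine lintegral_mono fun x => kappa_bound hp2 _ _ _ _ _ _ ?_ ?_ <;>
        simp only [cr, d2, hp0, hp1, vp0, vp1] <;> ring
  have fin : ∀ (μ ν : Measure ℝ) [SFinite μ] [SFinite ν],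
      ∫⁻ z, (((∫⁻ y, ∫⁻ x, Gk p y z x ∂ν ∂μ) + ∫⁻ y, ∫⁻ x, Gk p x z y ∂μ ∂ν)
        + ∫⁻ y, ∫⁻ x, Gk p x y z ∂ν ∂ν) ∂μ = 2 * SS p μ ν + SS p ν μ := by
    intro μ ν _ _
    have a1 : Measurable (fun z => ∫⁻ y, ∫⁻ x, Gk p y z x ∂ν ∂μ) :=
      m2 μ ν (fun q => q.1.2) (fun q => q.1.1) (fun q => q.2) (by fun_prop) (by fun_prop) (by fun_prop)
    have a2 : Measurable (fun z => ∫⁻ y, ∫⁻ x, Gk p x z y ∂μ ∂ν) :=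
      m2 ν μ (fun q => q.2) (fun q => q.1.1) (fun q => q.1.2) (by fun_prop) (by fun_prop) (by fun_prop)
    have a12 : Measurable (fun z => (∫⁻ y, ∫⁻ x, Gk p y z x ∂ν ∂μ) + ∫⁻ y, ∫⁻ x, Gk p x z y ∂μ ∂ν) :=
      a1.add a2
    rw [lintegral_add_left a12, lintegral_add_left a1, perm1, perm2, two_mul]
    rfl
  calc energyM p 1 Eset ≤ _ := lint_le _
    _ ≤ _ := add_le_add (lintegral_mono fun z => H z) (lintegral_mono fun z => V z)
    _ = (2 * SS p μ ν + SS p ν μ) + (2 * SS p ν μ + SS p μ ν) := by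
      rw [fin μ ν, fin ν μ]
    _ = _ := by ring

lemma SS_le (p : ℝ) (μ ν : Measure ℝ) (M N : ℝ) (hM : 0 ≤ M) (hν : ∀ᵐ c ∂ν, c ≠ 0)
    (h1 : ∀ c : ℝ, c ≠ 0 → ∫⁻ a, ENNReal.ofReal ((a^2+c^2)⁻¹) ∂μ ≤ ENNReal.ofReal (M / |c|))
    (h2 : ∫⁻ c, ENNReal.ofReal (|c|^(2-p)) ∂ν ≤ ENNReal.ofReal N) :
    SS p μ ν ≤ ENNReal.ofReal (2^p * M^2 * N) := by
  have m : ∀ c : ℝ, Measurable (fun a : ℝ => ENNReal.ofReal ((a^2+c^2)⁻¹)) := by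
    intro c; fun_prop
  calc SS p μ ν ≤ ∫⁻ c, ENNReal.ofReal (2^p * M^2) * ENNReal.ofReal (|c|^(2-p)) ∂ν := by
        unfold SS
        apply lintegral_mono_ae
        filter_upwards [hν] with c hc
        have hca : 0 < |c| := abs_pos.2 hc
        have e : ∫⁻ b, ∫⁻ a, Gk p a b c ∂μ ∂μ = ENNReal.ofReal (2^p * |c|^(4-p)) *
            (∫⁻ a, ENNReal.ofReal ((a^2+c^2)⁻¹) ∂μ) * ∫⁻ a, ENNReal.ofReal ((a^2+c^2)⁻¹) ∂μ := by
          unfold Gk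
          have : ∀ b : ℝ, ∫⁻ a, ENNReal.ofReal (2^p * |c|^(4-p)) * ENNReal.ofReal ((a^2+c^2)⁻¹) *
              ENNReal.ofReal ((b^2+c^2)⁻¹) ∂μ = ENNReal.ofReal (2^p * |c|^(4-p)) *
            (∫⁻ a, ENNReal.ofReal ((a^2+c^2)⁻¹) ∂μ) * ENNReal.ofReal ((b^2+c^2)⁻¹) := by
            intro b
            rw [lintegral_mul_const _ (by fun_prop), lintegral_const_mul _ (m c)]
          rw [lintegral_congr this, lintegral_const_mul _ (m c)]
        rw [e]
        calc _ ≤ ENNReal.ofReal (2^p * |c|^(4-p)) * ENNReal.ofReal (M / |c|) *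
              ENNReal.ofReal (M / |c|) := by gcongr <;> exact h1 c hc
          _ = _ := by
            rw [← ENNReal.ofReal_mul (by positivity), ← ENNReal.ofReal_mul (by positivity),
              ← ENNReal.ofReal_mul (by positivity)]
            congr 1
            rw [show 4 - p = 2 + (2-p) by ring, Real.rpow_add hca]
            simp only [Real.rpow_two]
            field_simp
    _ ≤ ENNReal.ofReal (2^p * M^2) * ENNReal.ofReal N := by
        rw [lintegral_const_mul _ (by fun_prop)]
        gcongr
    _ = _ := by rw [← ENNReal.ofReal_mul (by positivity)]

lemma arct (l u c : ℝ) (hlu : l ≤ u) (hc : c ≠ 0) :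
    ∫⁻ a in Icc l u, ENNReal.ofReal ((a^2+c^2)⁻¹) =
      ENNReal.ofReal ((Real.arctan (u/|c|) - Real.arctan (l/|c|)) / |c|) := by
  have hca : 0 < |c| := abs_pos.2 hc
  have hc2 : 0 < c^2 := by positivity
  have cont : Continuous (fun a : ℝ => (a^2+c^2)⁻¹) := by
    apply Continuous.inv₀ (by fun_prop)
    intro x; positivity
  rw [← ofReal_integral_eq_lintegral_ofReal (cont.integrableOn_Icc)
    (Eventually.of_forall fun a => by positivity), integral_Icc_eq_integral_Ioc,
    ← intervalIntegral.integral_of_le hlu,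
    intervalIntegral.integral_eq_sub_of_hasDerivAt (f := fun a => Real.arctan (a/|c|) / |c|)]
  · congr 1; ring
  · intro x _
    have := (((hasDerivAt_id x).div_const |c|).arctan).div_const |c|
    have e : (x^2+c^2)⁻¹ = 1 / (1 + (id x / |c|) ^ 2) * (1 / |c|) / |c| := by
      simp only [id]
      rw [← sq_abs c]
      field_simp
      ring
    rw [e]
    exact this
  · exact cont.intervalIntegrable _ _

lemma pw (p : ℝ) (hp3 : p < 3) :
    ∫⁻ c in Icc (0:ℝ) 1, ENNReal.ofReal (|c|^(2-p)) = ENNReal.ofReal (1/(3-p)) := by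
  have e : ∀ c ∈ Icc (0:ℝ) 1, ENNReal.ofReal (|c|^(2-p)) = ENNReal.ofReal (c^(2-p)) := by
    intro c hc; rw [abs_of_nonneg hc.1]
  have hi : IntervalIntegrable (fun c : ℝ => c^(2-p)) volume 0 1 :=
    intervalIntegral.intervalIntegrable_rpow' (by linarith)
  rw [setLIntegral_congr_fun measurableSet_Icc e, ← ofReal_integral_eq_lintegral_ofReal,
    integral_Icc_eq_integral_Ioc, ← intervalIntegral.integral_of_le zero_le_one,
    integral_rpow (Or.inl (by linarith))]
  · congr 1
    rw [Real.one_rpow, Real.zero_rpow (by linarith)]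
    ring
  · exact (intervalIntegrable_iff_integrableOn_Icc_of_le zero_le_one).1 hi
  · filter_upwards [ae_restrict_mem measurableSet_Icc] with c hc
    exact Real.rpow_nonneg hc.1 _

lemma pw2 (p : ℝ) (hp3 : p < 3) :
    ∫⁻ c in Icc (-1:ℝ) 1, ENNReal.ofReal (|c|^(2-p)) ≤ ENNReal.ofReal (2/(3-p)) := by
  have hsub : Icc (-1:ℝ) 1 ⊆ Icc (-1) 0 ∪ Icc 0 1 := by
    rintro x ⟨h1, h2⟩
    rcases le_total x 0 with h | h
    · exact Or.inl ⟨h1, h⟩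
    · exact Or.inr ⟨h, h2⟩
  have hneg : ∫⁻ c in Icc (-1:ℝ) 0, ENNReal.ofReal (|c|^(2-p)) = ENNReal.ofReal (1/(3-p)) := by
    have := (Measure.measurePreserving_neg (volume : Measure ℝ)).setLIntegral_comp_preimage_emb
      (MeasurableEquiv.neg ℝ).measurableEmbedding (fun c => ENNReal.ofReal (|c|^(2-p))) (Icc 0 1)
    rw [pw p hp3] at this
    rw [← this]
    simp
  calc _ ≤ _ := lintegral_mono_set hsub
    _ ≤ _ := lintegral_union_le _ _ _
    _ = _ := by
      rw [hneg, pw p hp3, ← ENNReal.ofReal_add] 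
      · congr 1; ring
      all_goals
        have : 0 < 3 - p := by linarith
        positivity

lemma ae_ne (s : Set ℝ) : ∀ᵐ c ∂(volume.restrict s), c ≠ (0:ℝ) := by
  apply ae_restrict_of_ae
  exact Measure.ae_ne volume 0

lemma main_bound (p : ℝ) (hp2 : 2 ≤ p) (hp3 : p < 3) :
    energyM p 1 Eset ≤ ENNReal.ofReal (72 * Real.pi / (3 - p) ^ 2) := by
  have h3 : 0 < 3 - p := by linarith
  have hpi := Real.pi_pos
  have s1 : SS p (volume.restrict (Icc (-1) 1)) (volume.restrict (Icc 0 1)) ≤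
      ENNReal.ofReal (2^p * Real.pi^2 * (1/(3-p))) := by
    apply SS_le _ _ _ _ _ hpi.le (ae_ne _) _ (pw p hp3).le
    intro c hc
    rw [arct _ _ _ (by norm_num) hc]
    apply ENNReal.ofReal_le_ofReal
    gcongr
    linarith [Real.arctan_lt_pi_div_two (1/|c|), Real.neg_pi_div_two_lt_arctan (-1/|c|)]
  have s2 : SS p (volume.restrict (Icc 0 1)) (volume.restrict (Icc (-1) 1)) ≤
      ENNReal.ofReal (2^p * (Real.pi/2)^2 * (2/(3-p))) := by
    apply SS_le _ _ _ _ _ (by positivity) (ae_ne _) _ (pw2 p hp3)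
    intro c hc
    rw [arct _ _ _ (by norm_num) hc]
    apply ENNReal.ofReal_le_ofReal
    gcongr
    simp only [zero_div, Real.arctan_zero]
    linarith [Real.arctan_lt_pi_div_two (1/|c|)]
  refine (total p hp2).trans ((add_le_add (mul_le_mul_right s1 3) (mul_le_mul_right s2 3)).trans ?_)
  have e3 : (3:ℝ≥0∞) = ENNReal.ofReal 3 := by simp
  rw [e3, ← ENNReal.ofReal_mul (by norm_num), ← ENNReal.ofReal_mul (by norm_num),
    ← ENNReal.ofReal_add (by positivity) (by positivity)]
  apply ENNReal.ofReal_le_ofReal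
  set t := 3 - p with ht
  have hpt : (2:ℝ)^p = 8 / 2^t := by
    rw [show p = 3 - t by rw [ht]; ring, Real.rpow_sub (by norm_num)]
    norm_num
  have h2t : 1 + t * Real.log 2 ≤ (2:ℝ)^t := by
    rw [Real.rpow_def_of_pos (by norm_num)]
    have := Real.add_one_le_exp (Real.log 2 * t)
    linarith
  have hl := Real.log_two_gt_d9
  have ht1 : t ≤ 1 := by linarith
  have key : t * Real.pi ≤ 2 * 2^t := by
    have := Real.pi_lt_d2
    nlinarith
  have h2tp : (0:ℝ) < 2^t := by positivity
  rw [hpt]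
  have : 3 * (8 / 2 ^ t * Real.pi ^ 2 * (1 / t)) + 3 * (8 / 2 ^ t * (Real.pi / 2) ^ 2 * (2 / t))
      = (36 * Real.pi * (t * Real.pi)) / (2^t * t^2) := by
    field_simp; ring
  rw [this, div_le_div_iff₀ (by positivity) (by positivity)]
  have : 0 ≤ 36 * Real.pi * t^2 := by positivity
  nlinarith [mul_le_mul_of_nonneg_left key this]

theorem Eset_energyM_lt_top (p : ℝ) (hp : p ∈ Set.Ico (2 : ℝ) 3) :
    energyM p 1 Eset ≤ ENNReal.ofReal (72 * Real.pi / (3 - p) ^ 2) ∧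
    energyM p 1 Eset < ⊤ := ⟨main_bound p hp.1 hp.2, (main_bound p hp.1 hp.2).trans_lt ENNReal.ofReal_lt_top⟩

end
end

section
/- Let E = ([−1,1]×{0}) ∪ ({0}×[0,1]) ⊂ ℝ². For every p ∈ (0,3) one has M_p^1(E) < ∞. -/
open MeasureTheory Metric Set Filter
open scoped ENNReal Topology Classical

noncomputable section

lemma norm_sub_two (x y : EuclideanSpace ℝ (Fin 2)) :
    ‖x - y‖ = √((x 0 - y 0) ^ 2 + (x 1 - y 1) ^ 2) := by
  rw [EuclideanSpace.norm_eq]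
  simp [Fin.sum_univ_two]

/-- Distance to a line, in terms of the cross product. -/
lemma infDist_line_mul_le (x y z : EuclideanSpace ℝ (Fin 2)) (hxy : x ≠ y) :
    Metric.infDist z (lineThrough x y) * ‖x - y‖ ≤
      |(x 0 - z 0) * (y 1 - z 1) - (x 1 - z 1) * (y 0 - z 0)| := by
  have hn : 0 < ‖x - y‖ := norm_pos_iff.2 (sub_ne_zero.2 hxy)
  have hn2 : ‖x - y‖ ^ 2 = (x 0 - y 0) ^ 2 + (x 1 - y 1) ^ 2 := by
    rw [norm_sub_two, Real.sq_sqrt (by positivity)]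
  set D := (x 0 - y 0) ^ 2 + (x 1 - y 1) ^ 2 with hD
  have hDpos : 0 < D := by rw [← hn2]; positivity
  set t : ℝ := ((z 0 - x 0) * (y 0 - x 0) + (z 1 - x 1) * (y 1 - x 1)) / D with ht
  have htD : t * D = (z 0 - x 0) * (y 0 - x 0) + (z 1 - x 1) * (y 1 - x 1) := by
    rw [ht]; field_simp
  have hmem : x + t • (y - x) ∈ lineThrough x y := ⟨t, rfl⟩
  have h1 := Metric.infDist_le_dist_of_mem (x := z) hmem
  refine (mul_le_mul_of_nonneg_right h1 hn.le).trans ?_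
  rw [dist_eq_norm]
  apply abs_le_of_sq_le_sq' _ (abs_nonneg _) |>.2
  rw [mul_pow, sq_abs, hn2, norm_sub_two, Real.sq_sqrt (by positivity)]
  simp only [PiLp.add_apply, PiLp.smul_apply, PiLp.sub_apply, smul_eq_mul]
  apply le_of_eq
  have e : ∀ a b c d : ℝ, ((a - t * b) ^ 2 + (c - t * d) ^ 2) * D =
      (a ^ 2 + c ^ 2) * D - 2 * (t * D) * (a * b + c * d) + (t * D) * t * (b ^ 2 + d ^ 2) := by
    intros; ring
  have e2 := e (z 0 - x 0) (y 0 - x 0) (z 1 - x 1) (y 1 - x 1)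
  have e3 : (t * D) * t * ((y 0 - x 0) ^ 2 + (y 1 - x 1) ^ 2) = (t * D) ^ 2 := by
    rw [hD]; ring
  rw [e3, htD] at e2
  rw [← sub_sub, ← sub_sub, e2, hD]
  ring

lemma alg_bound (a b h s u : ℝ) (hs : s = √(a ^ 2 + h ^ 2)) (hu : u = √(b ^ 2 + h ^ 2))
    (h0 : 0 < s) (h1 : 0 < u) :
    (|h| / (s * u)) ^ 3 * (|a| * |b| * |h|) ≤ 1 := by
  have ha : |a| ≤ s := hs ▸ Real.abs_le_sqrt (by nlinarith [sq_nonneg h])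
  have hh : |h| ≤ s := hs ▸ Real.abs_le_sqrt (by nlinarith [sq_nonneg a])
  have hb : |b| ≤ u := hu ▸ Real.abs_le_sqrt (by nlinarith [sq_nonneg h])
  have hh' : |h| ≤ u := hu ▸ Real.abs_le_sqrt (by nlinarith [sq_nonneg b])
  have e : (|h| / (s * u)) ^ 3 * (|a| * |b| * |h|) =
      (|a| * |h| * |h|) * (|b| * |h| * |h|) / ((s * s * s) * (u * u * u)) := by
    field_simp
  rw [e]
  apply div_le_one_of_le₀ _ (by positivity)
  gcongr

/-- The core cubed estimate, for a triple of points of `E`. -/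
lemma cross_bound (x y z : EuclideanSpace ℝ (Fin 2)) (hx : x ∈ Eset) (hy : y ∈ Eset)
    (hz : z ∈ Eset) (hxy : x ≠ y) (hyz : y ≠ z) (hxz : x ≠ z) :
    (|(x 0 - z 0) * (y 1 - z 1) - (x 1 - z 1) * (y 0 - z 0)| /
      (‖x - y‖ * ‖x - z‖ * ‖y - z‖)) ^ 3 * (‖x‖ * ‖y‖ * ‖z‖) ≤ 1 := by
  have p1 : 0 < ‖x - y‖ := norm_pos_iff.2 (sub_ne_zero.2 hxy)
  have p2 : 0 < ‖y - z‖ := norm_pos_iff.2 (sub_ne_zero.2 hyz)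
  have p3 : 0 < ‖x - z‖ := norm_pos_iff.2 (sub_ne_zero.2 hxz)
  have nx := norm_sub_two x 0
  have ny := norm_sub_two y 0
  have nz := norm_sub_two z 0
  have dxy := norm_sub_two x y
  have dyz := norm_sub_two y z
  have dxz := norm_sub_two x z
  simp only [sub_zero, PiLp.zero_apply] at nx ny nz
  -- symmetric key statement
  have key : ∀ a b h s u d : ℝ, s = √(a ^ 2 + h ^ 2) → u = √(b ^ 2 + h ^ 2) → d = |a - b| →
      0 < s → 0 < u → 0 < d →
      (|h * (a - b)| / (d * s * u)) ^ 3 * (|a| * |b| * |h|) ≤ 1 := by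
    intro a b h s u d hs hu hd s0 u0 d0
    have := alg_bound a b h s u hs hu s0 u0
    rw [abs_mul, ← hd]
    rwa [show |h| * d / (d * s * u) = |h| / (s * u) by field_simp]
  have sq0 : ∀ a : ℝ, √(a ^ 2) = |a| := Real.sqrt_sq_eq_abs
  rcases hx with ⟨hx, -⟩ | ⟨hx, -⟩ <;> rcases hy with ⟨hy, -⟩ | ⟨hy, -⟩ <;>
    rcases hz with ⟨hz, -⟩ | ⟨hz, -⟩ <;>
    simp only [hx, hy, hz, ne_eq, OfNat.ofNat_ne_zero, not_false_eq_true, zero_pow, add_zero,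
      zero_add, sub_zero, zero_sub, sq0, even_two, Even.neg_pow] at nx ny nz dxy dyz dxz ⊢
  · simp
  · convert key (x 0) (y 0) (z 1) _ _ _ dxz dyz dxy p3 p2 p1 using 2
    · congr 2; · rw [← abs_neg]; congr 1; ring
    · rw [nx, ny, nz]
  · convert key (x 0) (z 0) (y 1) _ _ _ dxy (by rw [dyz, add_comm]) dxz p1 p2 p3 using 2
    · congr 2
      · congr 1; ring
      · ring
    · rw [nx, ny, nz]; ring
  · convert key (y 1) (z 1) (x 0) _ _ _ (by rw [dxy, add_comm]) (by rw [dxz, add_comm]) dyz p1 p3 p2 using 2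
    · congr 2
      · congr 1; ring
      · ring
    · rw [nx, ny, nz]; ring
  · convert key (y 0) (z 0) (x 1) _ _ _ dxy dxz dyz p1 p3 p2 using 2
    · congr 2
      · rw [← abs_neg]; congr 1; ring
      · ring
    · rw [nx, ny, nz]; ring
  · convert key (x 1) (z 1) (y 0) _ _ _ (by rw [dxy, add_comm]) (by rw [dyz, add_comm]) dxz p1 p2 p3 using 2
    · congr 2
      · rw [← abs_neg]; congr 1; ring
      · ring
    · rw [nx, ny, nz]; ring
  · convert key (x 1) (y 1) (z 0) _ _ _ (by rw [dxz, add_comm]) (by rw [dyz, add_comm]) dxy p3 p2 p1 using 2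
    · congr 2; · congr 1; ring
    · rw [nx, ny, nz]
  · simp

lemma kappa_bound_s8 (p : ℝ) (hp : 0 < p) (x y z : EuclideanSpace ℝ (Fin 2)) (hx : x ∈ Eset)
    (hy : y ∈ Eset) (hz : z ∈ Eset) :
    kappa x y z ^ p ≤ (2 : ℝ≥0∞) ^ p *
      (‖z‖ₑ ^ (-(p / 3)) * (‖y‖ₑ ^ (-(p / 3)) * ‖x‖ₑ ^ (-(p / 3)))) := by
  unfold kappa
  split_ifs with h
  swap
  · rw [ENNReal.zero_rpow_of_pos hp]; exact zero_le
  obtain ⟨hxy, hyz, hxz⟩ := h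
  have p1 : 0 < ‖x - y‖ := norm_pos_iff.2 (sub_ne_zero.2 hxy)
  have p2 : 0 < ‖y - z‖ := norm_pos_iff.2 (sub_ne_zero.2 hyz)
  have p3 : 0 < ‖x - z‖ := norm_pos_iff.2 (sub_ne_zero.2 hxz)
  have hc := cross_bound x y z hx hy hz hxy hyz hxz
  have hi := infDist_line_mul_le x y z hxy
  set C := |(x 0 - z 0) * (y 1 - z 1) - (x 1 - z 1) * (y 0 - z 0)| with hC
  set K := C / (‖x - y‖ * ‖x - z‖ * ‖y - z‖) with hK
  have hK0 : 0 ≤ K := by rw [hK]; have : 0 ≤ C := abs_nonneg _; positivity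
  have hle : 2 * Metric.infDist z (lineThrough x y) / (‖x - z‖ * ‖y - z‖) ≤ 2 * K := by
    rw [hK, div_le_iff₀ (by positivity)]
    rw [show 2 * (C / (‖x - y‖ * ‖x - z‖ * ‖y - z‖)) * (‖x - z‖ * ‖y - z‖) = 2 * (C / ‖x - y‖) by
      field_simp]
    have := (le_div_iff₀ p1).2 hi
    linarith
  have h3 : ENNReal.ofReal K ^ (3 : ℝ) * (‖z‖ₑ * (‖y‖ₑ * ‖x‖ₑ)) ≤ 1 := by
    rw [← ofReal_norm, ← ofReal_norm, ← ofReal_norm, ← ENNReal.ofReal_mul (norm_nonneg _),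
      ← ENNReal.ofReal_mul (norm_nonneg _), ENNReal.ofReal_rpow_of_nonneg hK0 (by norm_num),
      ← ENNReal.ofReal_mul (by positivity)]
    apply ENNReal.ofReal_le_one.2
    refine le_trans (le_of_eq ?_) hc
    rw [show (3 : ℝ) = ((3 : ℕ) : ℝ) by norm_num, Real.rpow_natCast]; ring
  have hfin : ∀ w : EuclideanSpace ℝ (Fin 2), ‖w‖ₑ ≠ ⊤ := fun w => enorm_ne_top
  have h4 : ENNReal.ofReal K ^ p ≤ (‖z‖ₑ * (‖y‖ₑ * ‖x‖ₑ)) ^ (-(p / 3)) := by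
    have h5 : ENNReal.ofReal K ^ (3 : ℝ) ≤ (‖z‖ₑ * (‖y‖ₑ * ‖x‖ₑ))⁻¹ :=
      ENNReal.le_inv_iff_mul_le.2 h3
    have h6 := ENNReal.rpow_le_rpow h5 (show 0 ≤ p / 3 by positivity)
    rwa [← ENNReal.rpow_mul, show 3 * (p / 3) = p by ring, ENNReal.inv_rpow,
      ← ENNReal.rpow_neg] at h6
  have hm : (‖z‖ₑ * (‖y‖ₑ * ‖x‖ₑ)) ^ (-(p / 3)) =
      ‖z‖ₑ ^ (-(p / 3)) * (‖y‖ₑ ^ (-(p / 3)) * ‖x‖ₑ ^ (-(p / 3))) := by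
    rw [ENNReal.mul_rpow_of_ne_top (hfin _) (ENNReal.mul_ne_top (hfin _) (hfin _)),
      ENNReal.mul_rpow_of_ne_top (hfin _) (hfin _)]
  calc _ ≤ ENNReal.ofReal (2 * K) ^ p :=
        ENNReal.rpow_le_rpow (ENNReal.ofReal_le_ofReal hle) hp.le
    _ = 2 ^ p * ENNReal.ofReal K ^ p := by
        rw [ENNReal.ofReal_mul (by norm_num), ENNReal.mul_rpow_of_nonneg _ _ hp.le]; simp
    _ ≤ _ := by rw [← hm]; gcongr

lemma lintegral_seg (v : EuclideanSpace ℝ (Fin 2)) (hv : ‖v‖ = 1) (q : ℝ) (hq : q < 1) :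
    ∫⁻ x in (fun t : ℝ => t • v) '' Icc 0 1, ‖x‖ₑ ^ (-q) ∂ μH[1] < ⊤ := by
  have hiso : Isometry (fun t : ℝ => t • v) := by
    apply Isometry.of_dist_eq
    intro a b
    rw [dist_eq_norm, ← sub_smul, norm_smul, hv, mul_one, Real.dist_eq, Real.norm_eq_abs]
  have hemb : MeasurableEmbedding (fun t : ℝ => t • v) := hiso.isClosedEmbedding.measurableEmbedding
  have hmap := hiso.map_hausdorffMeasure (d := 1) (Or.inl zero_le_one)
  have h1 : (μH[1] : Measure (EuclideanSpace ℝ (Fin 2))).restrict ((fun t : ℝ => t • v) '' Icc 0 1)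
      = (Measure.map (fun t : ℝ => t • v) (volume.restrict (Icc 0 1))) := by
    rw [← hausdorffMeasure_real]
    rw [← Measure.restrict_restrict_of_subset (image_subset_range _ (Icc (0:ℝ) 1)), ← hmap,
      hemb.restrict_map, hemb.injective.preimage_image]
  rw [h1, hemb.lintegral_map]
  have h2 : IntegrableOn (fun t : ℝ => t ^ (-q)) (Ioc 0 1) := by
    have := intervalIntegral.intervalIntegrable_rpow' (a := 0) (b := 1) (r := -q) (by linarith)
    rwa [intervalIntegrable_iff_integrableOn_Ioc_of_le zero_le_one] at this
  have h3 := h2.2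
  rw [HasFiniteIntegral] at h3
  rw [Measure.restrict_congr_set Ioc_ae_eq_Icc.symm]
  refine lt_of_le_of_lt (le_of_eq ?_) h3
  apply setLIntegral_congr_fun measurableSet_Ioc
  intro t ht
  simp only
  rw [enorm_smul, ← ofReal_norm v, hv, ENNReal.ofReal_one, mul_one, Real.enorm_eq_ofReal ht.1.le,
    Real.enorm_eq_ofReal (Real.rpow_nonneg ht.1.le _), ENNReal.ofReal_rpow_of_pos ht.1]

lemma lintegral_Eset (q : ℝ) (hq : q < 1) : ∫⁻ x in Eset, ‖x‖ₑ ^ (-q) ∂ μH[1] < ⊤ := by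
  let e0 : EuclideanSpace ℝ (Fin 2) := !₂[1, 0]
  let e1 : EuclideanSpace ℝ (Fin 2) := !₂[0, 1]
  have n0 : ‖e0‖ = 1 := by simp [e0, EuclideanSpace.norm_eq]
  have n1 : ‖e1‖ = 1 := by simp [e1, EuclideanSpace.norm_eq]
  have hsub : Eset ⊆ ((fun t : ℝ => t • e0) '' Icc 0 1 ∪ (fun t : ℝ => t • (-e0)) '' Icc 0 1) ∪
      (fun t : ℝ => t • e1) '' Icc 0 1 := by
    rintro x (⟨h1, h2, h3⟩ | ⟨h1, h2, h3⟩)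
    · left
      rcases le_total 0 (x 0) with h | h
      · left
        refine ⟨x 0, ⟨h, h3⟩, ?_⟩
        ext i; fin_cases i <;> simp [e0, h1]
      · right
        refine ⟨-x 0, ⟨by linarith, by linarith⟩, ?_⟩
        ext i; fin_cases i <;> simp [e0, h1]
    · right
      refine ⟨x 1, ⟨h2, h3⟩, ?_⟩
      ext i; fin_cases i <;> simp [e1, h1]
  refine (lintegral_mono_set hsub).trans_lt ?_
  refine (lintegral_union_le _ _ _).trans_lt (ENNReal.add_lt_top.2 ⟨?_, lintegral_seg _ n1 q hq⟩)
  exact (lintegral_union_le _ _ _).trans_lt (ENNReal.add_lt_top.2 ⟨lintegral_seg _ n0 q hq,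
    lintegral_seg _ (by rw [norm_neg, n0]) q hq⟩)

lemma measurableSet_Eset : MeasurableSet Eset := by
  have h0 : Measurable (fun p : EuclideanSpace ℝ (Fin 2) => p 0) := by fun_prop
  have h1 : Measurable (fun p : EuclideanSpace ℝ (Fin 2) => p 1) := by fun_prop
  exact ((h1 (measurableSet_singleton 0)).inter (h0 measurableSet_Icc)).union
    ((h0 (measurableSet_singleton 0)).inter (h1 measurableSet_Icc))

theorem Eset_energyM_lt_top_all (p : ℝ) (hp : p ∈ Set.Ioo (0 : ℝ) 3) :
    energyM p 1 Eset < ⊤ := by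
  obtain ⟨hp0, hp3⟩ := hp
  set f : EuclideanSpace ℝ (Fin 2) → ℝ≥0∞ := fun x => ‖x‖ₑ ^ (-(p / 3)) with hf
  have hfm : Measurable f := by fun_prop
  have hI : ∫⁻ x in Eset, f x ∂ μH[1] < ⊤ := lintegral_Eset (p / 3) (by linarith)
  set I := ∫⁻ x in Eset, f x ∂ μH[1] with hIdef
  have hb : energyM p 1 Eset ≤ 2 ^ p * (I * (I * I)) := by
    unfold energyM
    calc _ ≤ ∫⁻ z in Eset, ∫⁻ y in Eset, ∫⁻ x in Eset, 2 ^ p * (f z * (f y * f x))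
            ∂ μH[1] ∂ μH[1] ∂ μH[1] := by
          refine setLIntegral_mono' measurableSet_Eset fun z hz => ?_
          refine setLIntegral_mono' measurableSet_Eset fun y hy => ?_
          exact setLIntegral_mono' measurableSet_Eset fun x hx =>
            kappa_bound_s8 p hp0 x y z hx hy hz
      _ = _ := by
          have a1 : ∀ z y, ∫⁻ x in Eset, 2 ^ p * (f z * (f y * f x)) ∂ μH[1] =
              2 ^ p * (f z * (f y * I)) := by
            intro z y
            rw [lintegral_const_mul _ (by fun_prop), lintegral_const_mul _ (by fun_prop),
              lintegral_const_mul _ hfm]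
          simp_rw [a1]
          have a2 : ∀ z, ∫⁻ y in Eset, 2 ^ p * (f z * (f y * I)) ∂ μH[1] =
              2 ^ p * (f z * (I * I)) := by
            intro z
            rw [lintegral_const_mul _ (by fun_prop), lintegral_const_mul _ (by fun_prop),
              lintegral_mul_const _ hfm]
          simp_rw [a2]
          rw [lintegral_const_mul _ (by fun_prop), lintegral_mul_const _ hfm]
  refine hb.trans_lt ?_
  exact ENNReal.mul_lt_top (ENNReal.rpow_lt_top_of_nonneg hp0.le (by simp))
    (ENNReal.mul_lt_top hI (ENNReal.mul_lt_top hI hI))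

end
end
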